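/- arXiv:2503.15236 — 3 statements merged into one kernel-verified Lean document; each statement's English description precedes it below -/
import Mathlib

section
/- Let a < b be real numbers and let E : ℝ → ℝ be continuous on [a,b], twice differentiable on [a,b), with E(s) > 0 for all s ∈ [a,b) and E'(s)² ≤ E(s)·E''(s) for all s ∈ [a,b). Then E(b) > 0. -/
/-- **Endpoint positivity from the differential inequality (E')² ≤ E·E''.**
If `E` is continuous on `[a,b]`, twice differentiable on `[a,b)`, positive on `[a,b)`,
and satisfies `E'(s)² ≤ E(s)·E''(s)` on `[a,b)`, then `E(b) > 0`. -/
theorem stmt_1 (a b : ℝ) (hab : a < b) (E E' E'' : ℝ → ℝ)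
    (hcont : ContinuousOn E (Set.Icc a b))
    (hE' : ∀ s ∈ Set.Ico a b, HasDerivAt E (E' s) s)
    (hE'' : ∀ s ∈ Set.Ico a b, HasDerivAt E' (E'' s) s)
    (hpos : ∀ s ∈ Set.Ico a b, 0 < E s)
    (hineq : ∀ s ∈ Set.Ico a b, (E' s) ^ 2 ≤ E s * E'' s) :
    0 < E b := by
  have hq : MonotoneOn (fun s => E' s / E s) (Set.Ico a b) := by
    have hd : ∀ s ∈ Set.Ico a b, HasDerivAt (fun s => E' s / E s)
        ((E'' s * E s - E' s * E' s) / E s ^ 2) s := fun s hs =>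
      (hE'' s hs).fun_div (hE' s hs) (hpos s hs).ne'
    refine monotoneOn_of_hasDerivWithinAt_nonneg (convex_Ico a b)
      (fun s hs => (hd s hs).continuousAt.continuousWithinAt)
      (fun s hs => (hd s (interior_subset hs)).hasDerivWithinAt) ?_
    intro s hs
    have := hineq s (interior_subset hs)
    apply div_nonneg _ (sq_nonneg _)
    nlinarith
  have ha : a ∈ Set.Ico a b := ⟨le_rfl, hab⟩
  obtain ⟨c, hc⟩ : ∃ c, c = E' a / E a := ⟨_, rfl⟩
  have hg : MonotoneOn (fun s => E s * Real.exp (-c * s)) (Set.Icc a b) := by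
    have hd : ∀ s ∈ Set.Ico a b, HasDerivAt (fun s => E s * Real.exp (-c * s))
        (E' s * Real.exp (-c * s) + E s * (Real.exp (-c * s) * (-c * 1))) s := fun s hs =>
      (hE' s hs).fun_mul (((hasDerivAt_id s).const_mul (-c)).exp)
    have hsub : ∀ s ∈ interior (Set.Icc a b), s ∈ Set.Ico a b := by
      intro s hs
      rw [interior_Icc] at hs
      exact ⟨hs.1.le, hs.2⟩
    refine monotoneOn_of_hasDerivWithinAt_nonneg (convex_Icc a b)
      (hcont.mul (by fun_prop))
      (fun s hs => (hd s (hsub s hs)).hasDerivWithinAt) ?_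
    intro s hs
    have hs' := hsub s hs
    have h1 : E' a / E a ≤ E' s / E s := hq ha hs' hs'.1
    rw [← hc, le_div_iff₀ (hpos s hs')] at h1
    have h2 := mul_nonneg (sub_nonneg.2 h1) (Real.exp_pos (-c * s)).le
    linarith
  have h : E a * Real.exp (-c * a) ≤ E b * Real.exp (-c * b) :=
    hg ⟨le_rfl, hab.le⟩ ⟨hab.le, le_rfl⟩ hab.le
  have h3 := (mul_pos (hpos a ha) (Real.exp_pos (-c * a))).trans_le h
  exact pos_of_mul_pos_left h3 (Real.exp_pos _).le
end

section
/- Let n ≥ 1, let 1 < p < q < ∞, let t₀ > 0, let x₀ ∈ ℝⁿ, and set α₀ = (1/(4t₀)) · (p/(p−1)) · (1/p − 1/q). Then the Gaussian f(x) = e^{−α₀|x−x₀|²} attains equality in the sharp hypercontractivity estimate: ‖H_{t₀} f‖_{L^q(ℝⁿ)} = M(p,q)^{n/2} (4πt₀)^{−(n/2)(1/p − 1/q)} ‖f‖_{L^p(ℝⁿ)}. -/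
open MeasureTheory Real

/-- The Euclidean heat semigroup:
`(H_t f)(x) = ∫ (4πt)^(-n/2) exp(-|x-y|²/(4t)) f(y) dy`. -/
noncomputable def heatFlow (n : ℕ) (t : ℝ) (f : EuclideanSpace ℝ (Fin n) → ℝ)
    (x : EuclideanSpace ℝ (Fin n)) : ℝ :=
  ∫ y, (4 * π * t) ^ (-(n : ℝ) / 2) * Real.exp (-‖x - y‖ ^ 2 / (4 * t)) * f y

/-- The constant `M(p,q) = p^(1/p)(1−1/p)^{1−1/p} / (q^{1/q}(1−1/q)^{1−1/q}) ·
(1/p−1/q)^{1/p−1/q}`. -/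
noncomputable def Mconst (p q : ℝ) : ℝ :=
  (p ^ (1 / p) * (1 - 1 / p) ^ (1 - 1 / p)) /
      (q ^ (1 / q) * (1 - 1 / q) ^ (1 - 1 / q)) *
    (1 / p - 1 / q) ^ (1 / p - 1 / q)

theorem gauss_eLpNorm (n : ℕ) (r b C : ℝ) (hr : 0 < r) (hb : 0 < b) (hC : 0 < C)
    (x₀ : EuclideanSpace ℝ (Fin n)) :
    eLpNorm (fun x => C * Real.exp (-b * ‖x - x₀‖ ^ 2)) (ENNReal.ofReal r) volume =
      ENNReal.ofReal (C * ((π / (r * b)) ^ ((n : ℝ) / 2)) ^ (1 / r)) := by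
  have hrb : 0 < r * b := by positivity
  have hI : ∫ x : EuclideanSpace ℝ (Fin n), Real.exp (-(r * b) * ‖x - x₀‖ ^ 2)
      = (π / (r * b)) ^ ((n : ℝ) / 2) := by
    rw [integral_sub_right_eq_self
      (fun x : EuclideanSpace ℝ (Fin n) => Real.exp (-(r * b) * ‖x‖ ^ 2)) x₀,
      GaussianFourier.integral_rexp_neg_mul_sq_norm hrb]
    simp
  have hpos : 0 < (π / (r * b)) ^ ((n : ℝ) / 2) := by positivity
  have hint : Integrable
      (fun x : EuclideanSpace ℝ (Fin n) => Real.exp (-(r * b) * ‖x - x₀‖ ^ 2)) := by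
    by_contra h
    rw [integral_undef h] at hI
    exact hpos.ne hI
  have hl : ∫⁻ x : EuclideanSpace ℝ (Fin n),
      ENNReal.ofReal (Real.exp (-(r * b) * ‖x - x₀‖ ^ 2))
      = ENNReal.ofReal ((π / (r * b)) ^ ((n : ℝ) / 2)) := by
    rw [← hI, ofReal_integral_eq_lintegral_ofReal hint
      (Filter.Eventually.of_forall fun x => (Real.exp_pos _).le)]
  rw [eLpNorm_eq_lintegral_rpow_enorm_toReal (by simpa using hr) ENNReal.ofReal_ne_top,
    ENNReal.toReal_ofReal hr.le]
  have he : ∀ x : EuclideanSpace ℝ (Fin n),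
      ‖C * Real.exp (-b * ‖x - x₀‖ ^ 2)‖ₑ ^ r =
        ENNReal.ofReal (C ^ r) * ENNReal.ofReal (Real.exp (-(r * b) * ‖x - x₀‖ ^ 2)) := by
    intro x
    rw [Real.enorm_eq_ofReal (by positivity), ENNReal.ofReal_rpow_of_pos (by positivity),
      ← ENNReal.ofReal_mul (by positivity), Real.mul_rpow hC.le (Real.exp_pos _).le,
      ← Real.exp_mul]
    congr 3
    ring
  simp_rw [he]
  rw [lintegral_const_mul' _ _ ENNReal.ofReal_ne_top, hl, ← ENNReal.ofReal_mul (by positivity),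
    ENNReal.ofReal_rpow_of_pos (by positivity), Real.mul_rpow (by positivity) hpos.le,
    ← Real.rpow_mul hC.le, mul_one_div_cancel hr.ne', Real.rpow_one]

theorem complete_sq {V : Type*} [NormedAddCommGroup V] [InnerProductSpace ℝ V] (s a : ℝ)
    (h : s + a ≠ 0) (w v : V) :
    s * ‖w - v‖ ^ 2 + a * ‖v‖ ^ 2 =
      (s + a) * ‖v - (s / (s + a)) • w‖ ^ 2 + s * a / (s + a) * ‖w‖ ^ 2 := by
  rw [norm_sub_sq_real, norm_sub_sq_real, norm_smul, inner_smul_right, real_inner_comm w v,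
    mul_pow, Real.norm_eq_abs, sq_abs]
  field_simp
  ring

theorem heat_gauss (n : ℕ) (t a : ℝ) (ht : 0 < t) (ha : 0 < a)
    (x₀ : EuclideanSpace ℝ (Fin n)) :
    heatFlow n t (fun x => Real.exp (-a * ‖x - x₀‖ ^ 2)) =
      fun x => (1 + 4 * t * a) ^ (-(n : ℝ) / 2) *
        Real.exp (-(a / (1 + 4 * t * a)) * ‖x - x₀‖ ^ 2) := by
  funext x
  unfold heatFlow
  set s : ℝ := 1 / (4 * t) with hs
  have hs0 : 0 < s := by positivity
  have hsa : 0 < s + a := by positivity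
  set z := x₀ + (s / (s + a)) • (x - x₀) with hz
  have h1 : ∀ y : EuclideanSpace ℝ (Fin n),
      (4 * π * t) ^ (-(n : ℝ) / 2) * Real.exp (-‖x - y‖ ^ 2 / (4 * t)) *
        Real.exp (-a * ‖y - x₀‖ ^ 2) =
      ((4 * π * t) ^ (-(n : ℝ) / 2) * Real.exp (-(s * a / (s + a)) * ‖x - x₀‖ ^ 2)) *
        Real.exp (-(s + a) * ‖y - z‖ ^ 2) := by
    intro y
    generalize (4 * π * t) ^ (-(n : ℝ) / 2) = K
    rw [mul_assoc, mul_assoc, ← Real.exp_add, ← Real.exp_add]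
    congr 2
    have := complete_sq s a hsa.ne' (x - x₀) (y - x₀)
    rw [sub_sub_sub_cancel_right, sub_sub, ← hz] at this
    have h2 : -‖x - y‖ ^ 2 / (4 * t) = - (s * ‖x - y‖ ^ 2) := by rw [hs]; ring
    rw [h2]
    linarith
  simp_rw [h1]
  rw [integral_const_mul, integral_sub_right_eq_self
      (fun y : EuclideanSpace ℝ (Fin n) => Real.exp (-(s + a) * ‖y‖ ^ 2)) z,
      GaussianFourier.integral_rexp_neg_mul_sq_norm hsa]
  have h3 : s * a / (s + a) = a / (1 + 4 * t * a) := by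
    rw [hs]; field_simp
  have h4 : 1 + 4 * t * a = (4 * π * t) * (π / (s + a))⁻¹ := by
    rw [hs]; field_simp
  rw [h3, mul_right_comm]
  congr 1
  rw [h4, Real.mul_rpow (x := 4 * π * t) (y := (π / (s + a))⁻¹) (by positivity) (by positivity),
    Real.inv_rpow (by positivity),
    neg_div, Real.rpow_neg (by positivity) (y := (n : ℝ) / 2) (x := π / (s + a)), inv_inv]
  simp

theorem const_id (p q t : ℝ) (hp : 1 < p) (hpq : p < q) (ht : 0 < t) (m a : ℝ)
    (ha : a = 1 / (4 * t) * (p / (p - 1)) * (1 / p - 1 / q)) :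
    (1 + 4 * t * a) ^ (-m) * ((π / (q * (a / (1 + 4 * t * a)))) ^ m) ^ (1 / q) =
      Mconst p q ^ m * (4 * π * t) ^ (-m * (1 / p - 1 / q)) * ((π / (p * a)) ^ m) ^ (1 / p) := by
  have hp0 : 0 < p := by linarith
  have hq0 : 0 < q := by linarith
  have hp1 : 0 < p - 1 := by linarith
  obtain ⟨P, hP⟩ : ∃ P, P = 1 - 1 / p := ⟨_, rfl⟩
  obtain ⟨Q, hQ⟩ : ∃ Q, Q = 1 - 1 / q := ⟨_, rfl⟩
  obtain ⟨d, hd⟩ : ∃ d, d = 1 / p - 1 / q := ⟨_, rfl⟩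
  have hP0 : 0 < P := by rw [hP, sub_pos, div_lt_one hp0]; exact hp
  have hQ0 : 0 < Q := by rw [hQ, sub_pos, div_lt_one hq0]; linarith
  have hd0 : 0 < d := by rw [hd, sub_pos]; exact one_div_lt_one_div_of_lt hp0 hpq
  have hpP : p / (p - 1) = 1 / P := by rw [hP]; field_simp
  have ha' : a = d / (4 * t * P) := by
    rw [ha, hpP, ← hd]; field_simp
  have hA : 1 + 4 * t * a = Q / P := by
    rw [ha']; field_simp; rw [hP, hQ, hd]; ring
  have hb : π / (q * (a / (Q / P))) = (4 * π * t) * Q / (q * d) := by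
    rw [ha']; field_simp
  have hc : π / (p * a) = (4 * π * t) * P / (p * d) := by
    rw [ha']; field_simp
  rw [hA, hb, hc]
  unfold Mconst
  rw [← hP, ← hQ, ← hd]
  have hT : 0 < 4 * π * t := by positivity
  generalize 4 * π * t = T at hT
  apply Real.log_injOn_pos (Set.mem_Ioi.2 (by positivity)) (Set.mem_Ioi.2 (by positivity))
  have e1 : P = 1 - 1/p := hP
  have l1 : Real.log ((Q / P) ^ (-m) * ((T * Q / (q * d)) ^ m) ^ (1 / q)) =
      -m * (Real.log Q - Real.log P) + (1 / q) * (m * (Real.log T + Real.log Q - (Real.log q + Real.log d))) := by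
    rw [Real.log_mul (by positivity) (by positivity), Real.log_rpow (by positivity),
      Real.log_rpow (by positivity), Real.log_rpow (by positivity),
      Real.log_div (by positivity) (by positivity), Real.log_div (by positivity) (by positivity),
      Real.log_mul (by positivity) (by positivity), Real.log_mul (by positivity) (by positivity)]
  have l2 : Real.log ((p ^ (1 / p) * P ^ P / (q ^ (1 / q) * Q ^ Q) * d ^ d) ^ m * T ^ (-m * d) *
      ((T * P / (p * d)) ^ m) ^ (1 / p)) =
      m * (1 / p * Real.log p + P * Real.log P - (1 / q * Real.log q + Q * Real.log Q) +
        d * Real.log d) + -m * d * Real.log T +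
      (1 / p) * (m * (Real.log T + Real.log P - (Real.log p + Real.log d))) := by
    rw [Real.log_mul (by positivity) (by positivity), Real.log_mul (by positivity) (by positivity),
      Real.log_rpow (by positivity), Real.log_rpow (by positivity),
      Real.log_rpow (by positivity), Real.log_rpow (by positivity),
      Real.log_mul (by positivity) (by positivity),
      Real.log_div (by positivity) (by positivity), Real.log_div (by positivity) (by positivity),
      Real.log_mul (by positivity) (by positivity), Real.log_mul (by positivity) (by positivity),
      Real.log_mul (by positivity) (by positivity), Real.log_mul (by positivity) (by positivity),
      Real.log_rpow hp0, Real.log_rpow hP0, Real.log_rpow hq0, Real.log_rpow hQ0,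
      Real.log_rpow hd0]
  rw [l1, l2]
  generalize Real.log P = lP
  generalize Real.log Q = lQ
  generalize Real.log d = ld
  rw [hP, hQ, hd]
  ring

/-- **Gaussians are extremizers in the sharp hypercontractivity estimate on `ℝⁿ`.**
For `1 < p < q < ∞`, `t₀ > 0`, `x₀ ∈ ℝⁿ`, and
`α₀ = (1/(4t₀))·(p/(p−1))·(1/p−1/q)`, the Gaussian `f(x) = e^{−α₀|x−x₀|²}` satisfies
`‖H_{t₀} f‖_{L^q} = M(p,q)^{n/2} (4πt₀)^{−(n/2)(1/p−1/q)} ‖f‖_{L^p}`. -/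
theorem stmt_9 (n : ℕ) (hn : 1 ≤ n) (p q : ℝ) (hp : 1 < p) (hpq : p < q)
    (t₀ : ℝ) (ht₀ : 0 < t₀) (x₀ : EuclideanSpace ℝ (Fin n)) :
    eLpNorm
        (heatFlow n t₀ fun x =>
          Real.exp (-(1 / (4 * t₀) * (p / (p - 1)) * (1 / p - 1 / q)) * ‖x - x₀‖ ^ 2))
        (ENNReal.ofReal q) volume =
      ENNReal.ofReal
          (Mconst p q ^ ((n : ℝ) / 2) * (4 * π * t₀) ^ (-(n : ℝ) / 2 * (1 / p - 1 / q))) *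
        eLpNorm
          (fun x =>
            Real.exp (-(1 / (4 * t₀) * (p / (p - 1)) * (1 / p - 1 / q)) * ‖x - x₀‖ ^ 2))
          (ENNReal.ofReal p) volume := by
  have hp0 : 0 < p := by linarith
  have hq0 : 0 < q := by linarith
  have hp1 : 0 < p - 1 := by linarith
  have hd0 : 0 < 1 / p - 1 / q := by rw [sub_pos]; exact one_div_lt_one_div_of_lt hp0 hpq
  have hid := const_id p q t₀ hp hpq ht₀ ((n : ℝ) / 2) _ rfl
  have ha : 0 < 1 / (4 * t₀) * (p / (p - 1)) * (1 / p - 1 / q) := by positivity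
  generalize 1 / (4 * t₀) * (p / (p - 1)) * (1 / p - 1 / q) = a at ha hid
  have hR := gauss_eLpNorm n p a 1 hp0 ha one_pos x₀
  simp only [one_mul] at hR
  have hP : 0 < 1 - 1 / p := by rw [sub_pos, div_lt_one hp0]; exact hp
  have hQ : 0 < 1 - 1 / q := by rw [sub_pos, div_lt_one hq0]; linarith
  have hM : 0 < Mconst p q := by unfold Mconst; positivity
  rw [heat_gauss n t₀ a ht₀ ha x₀, hR,
    gauss_eLpNorm n q _ _ hq0 (by positivity) (by positivity) x₀,
    ← ENNReal.ofReal_mul (by positivity), neg_div, hid]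
end

section
/- Let N > 0, λ > 0, K > 0, and 1 < p < P < ∞. Then ∫_p^P [ (N/2) · log( (2/(Nπe)) · K · λ s²/(s−1) ) − N/2 ] · s^{−2} ds = (N/2) · [ (1/p − 1/P) · log( 2λK/(Nπ) ) + log( p^{1/p}(1−1/p)^{1−1/p} ) − log( P^{1/P}(1−1/P)^{1−1/P} ) ]. -/
open MeasureTheory Real intervalIntegral

/-- **Closed-form evaluation of the integral `m = ∫_p^P (Φ(v(s)) − N/2) s⁻² ds`,**
where `Φ(s) = (N/2) log((2/(Nπe)) K s)` and `v(s) = λ s²/(s−1)` is Bakry's optimal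
choice: the value is
`(N/2) [ (1/p − 1/P) log(2λK/(Nπ)) + log(p^{1/p}(1−1/p)^{1−1/p}) − log(P^{1/P}(1−1/P)^{1−1/P}) ]`. -/
theorem stmt_16 (N lam K : ℝ) (hN : 0 < N) (hlam : 0 < lam) (hK : 0 < K)
    (p P : ℝ) (hp : 1 < p) (hpP : p < P) :
    (∫ s in p..P,
        (N / 2 * Real.log (2 / (N * π * Real.exp 1) * K * (lam * s ^ 2 / (s - 1))) - N / 2) /
          s ^ 2) =
      N / 2 *
        ((1 / p - 1 / P) * Real.log (2 * lam * K / (N * π)) +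
          Real.log (p ^ (1 / p) * (1 - 1 / p) ^ (1 - 1 / p)) -
          Real.log (P ^ (1 / P) * (1 - 1 / P) ^ (1 - 1 / P))) := by
  have hpi := Real.pi_pos
  set L := Real.log (2 * lam * K / (N * π)) with hL
  have key : ∀ s : ℝ, 1 < s →
      Real.log (2 / (N * π * Real.exp 1) * K * (lam * s ^ 2 / (s - 1))) =
        L - 1 + 2 * Real.log s - Real.log (s - 1) := by
    intro s hs
    have h1 : 0 < s - 1 := by linarith
    have h0 : 0 < s := by linarith
    have e : 2 / (N * π * Real.exp 1) * K * (lam * s ^ 2 / (s - 1)) =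
        (2 * lam * K / (N * π)) / Real.exp 1 * s ^ 2 / (s - 1) := by
      field_simp
    rw [e, Real.log_div (by positivity) h1.ne', Real.log_mul (by positivity) (by positivity),
      Real.log_div (by positivity) (by positivity), Real.log_exp, Real.log_pow, hL]
    push_cast
    ring
  have key2 : ∀ s : ℝ, 1 < s → Real.log (s ^ (1 / s) * (1 - 1 / s) ^ (1 - 1 / s)) =
      s⁻¹ * Real.log s + (1 - s⁻¹) * (Real.log (s - 1) - Real.log s) := by
    intro s hs
    have h1 : 0 < s - 1 := by linarith
    have h0 : 0 < s := by linarith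
    have e : 1 - 1 / s = (s - 1) / s := by field_simp
    have h2 : 0 < 1 - 1 / s := by rw [e]; positivity
    rw [Real.log_mul (Real.rpow_pos_of_pos h0 _).ne' (Real.rpow_pos_of_pos h2 _).ne',
      Real.log_rpow h0, Real.log_rpow h2]
    nth_rewrite 2 [e]
    rw [Real.log_div h1.ne' h0.ne', one_div]
  have hgt : ∀ s ∈ Set.uIcc p P, 1 < s := by
    intro s hs
    rw [Set.uIcc_of_le hpP.le] at hs
    linarith [hs.1]
  rw [intervalIntegral.integral_congr (g := fun s =>
    (N / 2 * (L - 1 + 2 * Real.log s - Real.log (s - 1)) - N / 2) / s ^ 2)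
    (fun s hs => by simp only [key s (hgt s hs)])]
  rw [intervalIntegral.integral_eq_sub_of_hasDerivAt (f := fun s =>
    -(N / 2) * (s⁻¹ * L + (s⁻¹ * Real.log s + (1 - s⁻¹) * (Real.log (s - 1) - Real.log s))))]
  · rw [key2 p hp, key2 P (hp.trans hpP)]
    ring
  · intro s hs
    have hs1 := hgt s hs
    have h1 : s - 1 ≠ 0 := by linarith
    have h0 : s ≠ 0 := by linarith
    have hi := hasDerivAt_inv h0
    have hl := Real.hasDerivAt_log h0
    have hm : HasDerivAt (fun s : ℝ => Real.log (s - 1)) (1 / (s - 1)) s :=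
      ((hasDerivAt_id s).sub_const 1).log h1
    have := ((hi.mul_const L).add ((hi.mul hl).add
      ((hi.const_sub 1).mul (hm.sub hl)))).const_mul (-(N / 2))
    refine this.congr_deriv ?_
    simp only [Pi.sub_apply]
    field_simp
    ring
  · apply ContinuousOn.intervalIntegrable
    intro s hs
    have hs1 := hgt s hs
    have h1 : s - 1 ≠ 0 := by linarith
    have h0 : s ≠ 0 := by linarith
    have h2 : s ^ 2 ≠ 0 := pow_ne_zero 2 h0
    apply ContinuousAt.continuousWithinAt
    fun_prop (disch := assumption)
end
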